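/- Let b be a connected, canonically compactifiable graph over a finite discrete measure space (X,m), and let h ∈ ℓ²(X,m) with h not identically zero and h̄ < 0. Then there exists c₀ < 0 such that for every c with c₀ < c < 0 there exists u ∈ D(L) with Lu = h e^u − c (i.e. Lu(x) = h(x)e^{u(x)} − c for all x ∈ X). -/

import Mathlib

open scoped BigOperators

/-- `u` is square-summable with respect to the measure `m`, i.e. `u ∈ ℓ²(X,m)`. -/
def MemL2 {X : Type*} (m : X → ℝ) (u : X → ℝ) : Prop :=
  Summable (fun x => u x ^ 2 * m x)

/-- `u` has finite energy: the sum defining `Q̃(u)` converges. -/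
def FinEnergy {X : Type*} (b : X → X → ℝ) (u : X → ℝ) : Prop :=
  Summable (fun p : X × X => b p.1 p.2 * (u p.1 - u p.2) ^ 2)

/-- The energy `Q(u) = (1/2) Σ_{x,y} b(x,y) (u(x) - u(y))²`. -/
noncomputable def energy {X : Type*} (b : X → X → ℝ) (u : X → ℝ) : ℝ :=
  (1 / 2) * ∑' p : X × X, b p.1 p.2 * (u p.1 - u p.2) ^ 2

/-- The bilinear energy form `Q(u,v) = (1/2) Σ_{x,y} b(x,y)(u(x)-u(y))(v(x)-v(y))`. -/
noncomputable def energyBil {X : Type*} (b : X → X → ℝ) (u v : X → ℝ) : ℝ :=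
  (1 / 2) * ∑' p : X × X, b p.1 p.2 * (u p.1 - u p.2) * (v p.1 - v p.2)

/-- The form domain `D(Q) = ℓ²(X,m) ∩ D̃`. -/
def MemDQ {X : Type*} (b : X → X → ℝ) (m : X → ℝ) (u : X → ℝ) : Prop :=
  MemL2 m u ∧ FinEnergy b u

/-- The form norm `‖u‖_Q = (Q(u) + ‖u‖₂²)^{1/2}`. -/
noncomputable def formNorm {X : Type*} (b : X → X → ℝ) (m : X → ℝ) (u : X → ℝ) : ℝ :=
  Real.sqrt (energy b u + ∑' x, u x ^ 2 * m x)

/-- `b` is a graph over `X`: symmetric, nonnegative, zero on the diagonal,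
with summable rows. -/
structure IsGraph {X : Type*} (b : X → X → ℝ) : Prop where
  symm : ∀ x y, b x y = b y x
  nonneg : ∀ x y, 0 ≤ b x y
  diag : ∀ x, b x x = 0
  row_summable : ∀ x, Summable (fun y => b x y)

/-- The graph `b` is connected: any two points are joined by a path of edges of
positive weight. -/
def GraphConnected {X : Type*} (b : X → X → ℝ) : Prop :=
  ∀ x y : X, Relation.ReflTransGen (fun a c => 0 < b a c) x y

/-- `(X,m)` is a finite discrete measure space: `m > 0` everywhere and `m(X) < ∞`. -/
structure FinMeasure {X : Type*} (m : X → ℝ) : Prop where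
  pos : ∀ x, 0 < m x
  summable : Summable m

/-- The graph `b` over `(X,m)` is canonically compactifiable: every function in
`D(Q)` is bounded. -/
def CanCompact {X : Type*} (b : X → X → ℝ) (m : X → ℝ) : Prop :=
  ∀ u : X → ℝ, MemDQ b m u → ∃ M : ℝ, ∀ x, |u x| ≤ M

/-- `u ∈ D(L)` with `L u = f` for the Neumann Laplacian `L`:
`u ∈ D(Q)`, `f ∈ ℓ²(X,m)` and `Q(u,v) = ⟨f,v⟩` for all `v ∈ D(Q)`. -/
def IsLap {X : Type*} (b : X → X → ℝ) (m : X → ℝ) (u f : X → ℝ) : Prop :=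
  MemDQ b m u ∧ MemL2 m f ∧
    ∀ v : X → ℝ, MemDQ b m v → energyBil b u v = ∑' x, f x * v x * m x

/-- The mean `ū = ⟨u,1⟩ / m(X)`. -/
noncomputable def mean {X : Type*} (m : X → ℝ) (u : X → ℝ) : ℝ :=
  (∑' x, u x * m x) / (∑' x, m x)

/-!
Replacing `u` by `w + log s` turns `L u = h e ^ u - c` into `L w = s h e ^ w - c`. Testing with `1`
forces `s = c m(X) / A(w)` with `A(w) = ∑ h e ^ w m`, so one has to solve the mean field equation
`Q(w, v) = c (m(X) / A(w) ∑ h e ^ w v m - ∑ v m)` near `w = 0`, where `A(0) = ∑ h m ≠ 0`; then `s`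
is positive as soon as `c` and `∑ h m` have the same sign. Its right-hand side vanishes at the
constant `v = 1`, so the solvability condition is built in, and `Q` may be replaced by the pinned
form `Q(w, v) + w(o) v(o)`: testing with `1` shows `w(o) = 0` afterwards. Canonical
compactifiability embeds `D(Q)` continuously into the Banach algebra `ℓ^∞`, which makes the
pinned form coercive and the right-hand side a `C¹` function of `w`; for small `c` the implicit
function theorem at `(c, w) = (0, 0)` provides `w`.
-/

open Filter Topology
open scoped ENNReal lp

section ImplicitFunction

variable {𝕜 : Type*} [NontriviallyNormedField 𝕜] [CompleteSpace 𝕜]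
  {E E' : Type*} [NormedAddCommGroup E] [NormedSpace 𝕜 E] [CompleteSpace E]
  [NormedAddCommGroup E'] [NormedSpace 𝕜 E'] [CompleteSpace E']

theorem eventually_exists_map_eq_smul (L : E ≃L[𝕜] E') {F : E → E'}
    {F' : E →L[𝕜] E'} (hF : HasStrictFDerivAt F F' 0) {s : Set E} (hs : s ∈ 𝓝 0) :
    ∀ᶠ c in 𝓝 (0 : 𝕜), ∃ w ∈ s, L w = c • F w := by
  let Φ : 𝕜 × E → E' := fun p => L p.2 - p.1 • F p.2
  let Φ' : 𝕜 × E →L[𝕜] E' :=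
    (L : E →L[𝕜] E') ∘L .snd 𝕜 𝕜 E - (ContinuousLinearMap.fst 𝕜 𝕜 E).smulRight (F 0)
  have hF0 : HasStrictFDerivAt (fun p : 𝕜 × E => F p.2) (F' ∘L .snd 𝕜 𝕜 E) (0, 0) :=
    hF.comp ((0, 0) : 𝕜 × E) hasStrictFDerivAt_snd
  have hΦ : HasStrictFDerivAt Φ Φ' (0, 0) := by
    have h := (L.hasStrictFDerivAt.comp ((0, 0) : 𝕜 × E) hasStrictFDerivAt_snd).sub
      ((hasStrictFDerivAt_fst (p := ((0, 0) : 𝕜 × E))).smul hF0)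
    convert! h using 1
    ext <;> simp [Φ']
  have hinv : (Φ' ∘L .inr 𝕜 𝕜 E).IsInvertible := ⟨L, by ext; simp [Φ']⟩
  filter_upwards [hΦ.tendsto_implicitFunctionOfProdDomain hinv hs,
    hΦ.eventually_apply_implicitFunctionOfProdDomain hinv] with c hcs hc
  exact ⟨_, hcs, by simpa [Φ, sub_eq_zero] using hc⟩

end ImplicitFunction

section BanachAlgebra

variable {𝕜 A H : Type*} [NontriviallyNormedField 𝕜] [NormedRing A] [NormedAlgebra 𝕜 A]
  [NormedAddCommGroup H] [NormedSpace 𝕜 H]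

/-- The bilinear form `(g, v) ↦ μ (g * ι v)` on `A × H`, where a functional `μ` on the algebra `A`
plays the role of an integral and `ι` that of an embedding of `H` into `A`. -/
noncomputable def mulForm (μ : A →L[𝕜] 𝕜) (ι : H →L[𝕜] A) : A →L[𝕜] H →L[𝕜] 𝕜 :=
  (ContinuousLinearMap.compL 𝕜 H A 𝕜 μ) ∘L
    ((ContinuousLinearMap.mul 𝕜 A).bilinearComp (.id 𝕜 A) ι)

end BanachAlgebra

section MeanFieldForce

variable {A H : Type*} [NormedRing A] [NormedAlgebra ℝ A]
  [NormedAddCommGroup H] [NormedSpace ℝ H]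

/-- The functional `v ↦ μ 1 / κ (exp (ι w)) * κ (exp (ι w) * ι v) - μ (ι v)`, the right-hand side of
the abstract mean field equation `B w = c • meanFieldForce κ μ ι w`. -/
noncomputable def meanFieldForce (κ μ : A →L[ℝ] ℝ) (ι : H →L[ℝ] A) (w : H) : H →L[ℝ] ℝ :=
  (μ 1 / κ (NormedSpace.exp (ι w))) • mulForm κ ι (NormedSpace.exp (ι w)) - μ ∘L ι

theorem meanFieldForce_apply (κ μ : A →L[ℝ] ℝ) (ι : H →L[ℝ] A) (w v : H) :
    meanFieldForce κ μ ι w v =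
      μ 1 / κ (NormedSpace.exp (ι w)) * κ (NormedSpace.exp (ι w) * ι v) - μ (ι v) := rfl

theorem meanFieldForce_apply_of_map_eq_one {κ μ : A →L[ℝ] ℝ} {ι : H →L[ℝ] A} {w e : H}
    (hw : κ (NormedSpace.exp (ι w)) ≠ 0) (he : ι e = 1) : meanFieldForce κ μ ι w e = 0 := by
  rw [meanFieldForce_apply, he, mul_one, div_mul_cancel₀ _ hw, sub_self]

variable [CompleteSpace A]

theorem contDiff_exp_comp (ι : H →L[ℝ] A) : ContDiff ℝ 1 fun w : H => NormedSpace.exp (ι w) :=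
  (AnalyticOnNhd.contDiff fun g _ => NormedSpace.exp_analytic (𝕂 := ℝ) g).comp ι.contDiff

theorem contDiffAt_meanFieldForce {κ : A →L[ℝ] ℝ} (hκ : κ 1 ≠ 0) (μ : A →L[ℝ] ℝ)
    (ι : H →L[ℝ] A) : ContDiffAt ℝ 1 (meanFieldForce κ μ ι) 0 := by
  have hexp := contDiff_exp_comp ι
  have hκexp : ContDiffAt ℝ 1 (fun w : H => κ (NormedSpace.exp (ι w))) 0 :=
    (κ.contDiff.comp hexp).contDiffAt
  have hκ0 : κ (NormedSpace.exp (ι 0)) ≠ 0 := by rwa [map_zero, NormedSpace.exp_zero]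
  exact ((contDiffAt_const.div hκexp hκ0).smul
    ((mulForm κ ι).contDiff.comp hexp).contDiffAt).sub contDiffAt_const

theorem eventually_pos_mul_map_exp {κ : A →L[ℝ] ℝ} (hκ : κ 1 ≠ 0) (ι : H →L[ℝ] A) :
    ∀ᶠ w in 𝓝 (0 : H), 0 < κ 1 * κ (NormedSpace.exp (ι w)) := by
  have hcont : Continuous fun w : H => κ 1 * κ (NormedSpace.exp (ι w)) :=
    continuous_const.mul (κ.continuous.comp (contDiff_exp_comp ι).continuous)
  refine hcont.continuousAt.eventually_const_lt ?_
  simpa only [map_zero, NormedSpace.exp_zero] using mul_self_pos.2 hκ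

end MeanFieldForce

theorem eventually_exists_eq_smul_meanFieldForce {A H : Type*} [NormedRing A]
    [NormedAlgebra ℝ A] [CompleteSpace A] [NormedAddCommGroup H] [InnerProductSpace ℝ H]
    [CompleteSpace H] {B : H →L[ℝ] H →L[ℝ] ℝ} (hB : IsCoercive B) {κ : A →L[ℝ] ℝ} (hκ : κ 1 ≠ 0)
    (μ : A →L[ℝ] ℝ) (ι : H →L[ℝ] A) :
    ∀ᶠ c in 𝓝 (0 : ℝ), ∃ w : H, 0 < κ 1 * κ (NormedSpace.exp (ι w)) ∧
      B w = c • meanFieldForce κ μ ι w := by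
  let L : H ≃L[ℝ] (H →L[ℝ] ℝ) := hB.continuousLinearEquivOfBilin.trans
    (InnerProductSpace.toDual ℝ H).toContinuousLinearEquiv
  have hL : ∀ w, L w = B w := fun w => by ext v; simp [L]
  have hF := (contDiffAt_meanFieldForce hκ μ ι).hasStrictFDerivAt one_ne_zero
  filter_upwards [eventually_exists_map_eq_smul L hF (eventually_pos_mul_map_exp hκ ι)]
    with c ⟨w, hw, hLw⟩
  exact ⟨w, hw, hL w ▸ hLw⟩

section BoundedFunctions

variable {X : Type*}

theorem exists_clm_eq_tsum_mul {k : X → ℝ} (hk : Summable k) :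
    ∃ κ : ℓ^∞(X, ℝ) →L[ℝ] ℝ, ∀ g, κ g = ∑' x, k x * g x := by
  have hk1 : Memℓp k 1 := memℓp_gen (by simpa using hk.abs)
  exact ⟨lp.dualPairing 1 ∞ (fun _ => ContinuousLinearMap.mul ℝ ℝ) (K := 1)
    (fun _ => ContinuousLinearMap.opNorm_mul_le ℝ ℝ) ⟨k, hk1⟩, fun _ => rfl⟩

theorem lp_infty_exp_apply (g : ℓ^∞(X, ℝ)) (x : X) :
    NormedSpace.exp g x = Real.exp (g x) := by
  let evalHom : ℓ^∞(X, ℝ) →+* ℝ :=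
    { toFun := fun f => f x
      map_one' := rfl
      map_mul' := fun _ _ => rfl
      map_zero' := rfl
      map_add' := fun _ _ => rfl }
  have hcont : Continuous evalHom := (lp.evalCLM ℝ (fun _ : X => ℝ) (p := ∞) x).continuous
  rw [Real.exp_eq_exp_ℝ]
  exact NormedSpace.map_exp evalHom hcont g

end BoundedFunctions

section SquareSummable

variable {X : Type*} {m u v : X → ℝ}

theorem MemL2.sub (hm : ∀ x, 0 ≤ m x) (hu : MemL2 m u) (hv : MemL2 m v) :
    MemL2 m (fun x => u x - v x) := by
  refine ((hu.add hv).mul_left 2).of_nonneg_of_le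
    (fun x => mul_nonneg (sq_nonneg _) (hm x)) fun x => ?_
  have hsq : (u x - v x) ^ 2 ≤ 2 * (u x ^ 2 + v x ^ 2) := by linarith [sq_nonneg (u x + v x)]
  calc (u x - v x) ^ 2 * m x ≤ 2 * (u x ^ 2 + v x ^ 2) * m x :=
        mul_le_mul_of_nonneg_right hsq (hm x)
    _ = 2 * (u x ^ 2 * m x + v x ^ 2 * m x) := by ring

theorem MemL2.mul_of_abs_le (hm : ∀ x, 0 ≤ m x) (hu : MemL2 m u) {C : ℝ}
    (hv : ∀ x, |v x| ≤ C) : MemL2 m (fun x => u x * v x) := by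
  refine (hu.mul_right (C ^ 2)).of_nonneg_of_le
    (fun x => mul_nonneg (sq_nonneg _) (hm x)) fun x => ?_
  have hsq : v x ^ 2 ≤ C ^ 2 := sq_le_sq.2 ((hv x).trans (le_abs_self C))
  calc (u x * v x) ^ 2 * m x = u x ^ 2 * m x * v x ^ 2 := by ring
    _ ≤ u x ^ 2 * m x * C ^ 2 := mul_le_mul_of_nonneg_left hsq (mul_nonneg (sq_nonneg _) (hm x))

theorem FinMeasure.memL2_const (hm : FinMeasure m) (c : ℝ) : MemL2 m fun _ => c :=
  hm.summable.mul_left _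

theorem MemL2.summable_mul (hm : FinMeasure m) (hu : MemL2 m u) : Summable fun x => u x * m x := by
  refine Summable.of_norm_bounded (g := fun x => u x ^ 2 * m x + m x) (hu.add hm.summable)
    fun x => ?_
  have hx := hm.pos x
  rw [Real.norm_eq_abs, abs_mul, abs_of_pos hx]
  nlinarith [sq_nonneg (|u x| - 1), sq_abs (u x)]

end SquareSummable

section Energy

variable {X : Type*} {b : X → X → ℝ} {m u : X → ℝ}

theorem FinMeasure.memDQ_const (hm : FinMeasure m) (c : ℝ) : MemDQ b m fun _ => c :=
  ⟨hm.memL2_const c, by simp [FinEnergy, summable_zero]⟩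

theorem MemDQ.add_const (hm : FinMeasure m) (hu : MemDQ b m u) (c : ℝ) :
    MemDQ b m fun x => u x + c := by
  refine ⟨?_, by simpa only [FinEnergy, add_sub_add_right_eq_sub] using hu.2⟩
  simpa only [sub_neg_eq_add] using hu.1.sub (fun x => (hm.pos x).le) (hm.memL2_const (-c))

theorem energyBil_add_const (b : X → X → ℝ) (u v : X → ℝ) (c : ℝ) :
    energyBil b (fun x => u x + c) v = energyBil b u v := by
  simp only [energyBil, add_sub_add_right_eq_sub]

theorem energyBil_const_right (b : X → X → ℝ) (u : X → ℝ) (c : ℝ) :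
    energyBil b u (fun _ => c) = 0 := by
  simp [energyBil]

theorem energyBil_self (b : X → X → ℝ) (u : X → ℝ) : energyBil b u u = energy b u := by
  simp only [energyBil, energy, mul_assoc, sq]

theorem energy_nonneg (hb : ∀ x y, 0 ≤ b x y) (u : X → ℝ) : 0 ≤ energy b u :=
  mul_nonneg (by norm_num) (tsum_nonneg fun p => mul_nonneg (hb _ _) (sq_nonneg _))

theorem exists_sq_sub_le_energy (hb : ∀ x y, 0 ≤ b x y) {o x : X}
    (hox : Relation.ReflTransGen (fun y z => 0 < b y z) o x) :
    ∃ K, 0 ≤ K ∧ ∀ u, FinEnergy b u → (u x - u o) ^ 2 ≤ K * energy b u := by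
  induction hox with
  | refl => exact ⟨0, le_rfl, fun u _ => by simp⟩
  | @tail y z _ hyz ih =>
    obtain ⟨K, hK, hKy⟩ := ih
    refine ⟨2 * K + 4 / b y z, by positivity, fun u hu => ?_⟩
    have hedge : b y z * (u y - u z) ^ 2 ≤ 2 * energy b u := by
      have := hu.le_tsum (y, z) fun p _ => mul_nonneg (hb _ _) (sq_nonneg _)
      simpa [energy] using this
    calc (u z - u o) ^ 2 ≤ 2 * (u y - u o) ^ 2 + 2 * (u y - u z) ^ 2 := by
          linarith [sq_nonneg ((u y - u o) + (u y - u z))]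
      _ ≤ 2 * (K * energy b u) + 2 * (2 * energy b u / b y z) := by
          gcongr
          · exact hKy u hu
          · rwa [le_div_iff₀' hyz]
      _ = (2 * K + 4 / b y z) * energy b u := by ring

theorem GraphConnected.exists_sq_le_energy_add_sq (hb : ∀ x y, 0 ≤ b x y)
    (hconn : GraphConnected b) (o x : X) :
    ∃ K, 0 ≤ K ∧ ∀ u, FinEnergy b u → u x ^ 2 ≤ K * (energy b u + u o ^ 2) := by
  obtain ⟨K, hK, hKx⟩ := exists_sq_sub_le_energy hb (hconn o x)
  refine ⟨2 * K + 2, by positivity, fun u hu => ?_⟩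
  calc u x ^ 2 ≤ 2 * (u x - u o) ^ 2 + 2 * u o ^ 2 := by linarith [sq_nonneg (u x - 2 * u o)]
    _ ≤ 2 * (K * energy b u) + 2 * u o ^ 2 := by gcongr; exact hKx u hu
    _ ≤ (2 * K + 2) * (energy b u + u o ^ 2) := by
      linarith [energy_nonneg hb u, mul_nonneg hK (sq_nonneg (u o))]

theorem tsum_sub_sum_le_tsum_sub_sum {f g : X → ℝ} (hf : Summable f) (hg : Summable g)
    (hfg : ∀ x, f x ≤ g x) (F : Finset X) :
    ∑' x, f x - ∑ x ∈ F, f x ≤ ∑' x, g x - ∑ x ∈ F, g x := by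
  have hle := (hg.sub hf).sum_le_tsum F fun x _ => sub_nonneg.2 (hfg x)
  rw [hg.tsum_sub hf, Finset.sum_sub_distrib] at hle
  linarith

theorem FinMeasure.exists_finset_mul_tsum_sub_sum_le (hm : FinMeasure m) (C : ℝ) {ε : ℝ}
    (hε : 0 < ε) : ∃ F : Finset X, C * (∑' x, m x - ∑ x ∈ F, m x) ≤ ε := by
  have htail : Tendsto (fun F : Finset X => C * (∑' x, m x - ∑ x ∈ F, m x)) atTop (𝓝 0) := by
    simpa using (hm.summable.hasSum.const_sub (∑' x, m x)).const_mul C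
  exact (htail.eventually_le_const hε).exists

theorem GraphConnected.exists_tsum_sq_mul_le (hb : ∀ x y, 0 ≤ b x y) (hconn : GraphConnected b)
    (hm : FinMeasure m) (o : X) {C : ℝ}
    (hsup : ∀ u, MemDQ b m u → ∀ x, u x ^ 2 ≤ C * (energy b u + ∑' y, u y ^ 2 * m y)) :
    ∃ K, 0 ≤ K ∧ ∀ u, MemDQ b m u → ∑' x, u x ^ 2 * m x ≤ K * (energy b u + u o ^ 2) := by
  -- Off a large finite set the sup bound makes the `ℓ²` mass at most half of `E + N`, so that
  -- `N / 2` can be absorbed; on the finite set paths to `o` are used.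
  choose K hK hKx using hconn.exists_sq_le_energy_add_sq hb o
  obtain ⟨F, hF⟩ := hm.exists_finset_mul_tsum_sub_sum_le C (ε := 1 / 2) (by norm_num)
  have hKm : 0 ≤ ∑ x ∈ F, K x * m x :=
    Finset.sum_nonneg fun x _ => mul_nonneg (hK x) (hm.pos x).le
  refine ⟨2 * ∑ x ∈ F, K x * m x + 1, by positivity, fun u hu => ?_⟩
  set E := energy b u
  set N := ∑' x, u x ^ 2 * m x
  have hE : 0 ≤ E := energy_nonneg hb u
  have hN : 0 ≤ N := tsum_nonneg fun x => mul_nonneg (sq_nonneg _) (hm.pos x).le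
  have hfinite : ∑ x ∈ F, u x ^ 2 * m x ≤ (∑ x ∈ F, K x * m x) * (E + u o ^ 2) := by
    rw [Finset.sum_mul]
    refine Finset.sum_le_sum fun x _ => ?_
    rw [mul_right_comm]
    exact mul_le_mul_of_nonneg_right (hKx x u hu.2) (hm.pos x).le
  have htail : N - ∑ x ∈ F, u x ^ 2 * m x ≤ (E + N) / 2 :=
    calc N - ∑ x ∈ F, u x ^ 2 * m x
        ≤ ∑' x, C * (E + N) * m x - ∑ x ∈ F, C * (E + N) * m x :=
          tsum_sub_sum_le_tsum_sub_sum hu.1 (hm.summable.mul_left _)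
            (fun x => mul_le_mul_of_nonneg_right (hsup u hu x) (hm.pos x).le) F
      _ = (E + N) * (C * (∑' x, m x - ∑ x ∈ F, m x)) := by
          rw [tsum_mul_left, ← Finset.mul_sum]; ring
      _ ≤ (E + N) * (1 / 2) := mul_le_mul_of_nonneg_left hF (add_nonneg hE hN)
      _ = (E + N) / 2 := by ring
  linarith [sq_nonneg (u o)]

end Energy

section FormDomain

variable {X : Type*} {b : X → X → ℝ} {m : X → ℝ}

/-- The coordinates `√m(x) u(x)` and `√(b(x,y)/2) (u(x) - u(y))` of a function `u`. The factors are
chosen so that their squares add up to `‖u‖_Q²`. -/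
noncomputable def formCoord (b : X → X → ℝ) (m : X → ℝ) : (X → ℝ) →ₗ[ℝ] (X ⊕ X × X → ℝ) where
  toFun u := Sum.elim (fun x => √(m x) * u x) fun p => √(b p.1 p.2 / 2) * (u p.1 - u p.2)
  map_add' u v := by ext (x | p) <;> simp <;> ring
  map_smul' c u := by ext (x | p) <;> simp <;> ring

@[simp]
theorem formCoord_inl (u : X → ℝ) (x : X) : formCoord b m u (.inl x) = √(m x) * u x := rfl

@[simp]
theorem formCoord_inr (u : X → ℝ) (p : X × X) :
    formCoord b m u (.inr p) = √(b p.1 p.2 / 2) * (u p.1 - u p.2) := rfl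

theorem memℓp_formCoord_iff (hb : ∀ x y, 0 ≤ b x y) (hm : ∀ x, 0 ≤ m x) {u : X → ℝ} :
    Memℓp (formCoord b m u) 2 ↔ MemDQ b m u := by
  have hinl : ∀ x, ‖formCoord b m u (.inl x)‖ ^ (2 : ℝ≥0∞).toReal = u x ^ 2 * m x := fun x => by
    simp [mul_pow, Real.sq_sqrt (hm x), mul_comm]
  have hinr : ∀ p : X × X, ‖formCoord b m u (.inr p)‖ ^ (2 : ℝ≥0∞).toReal =
      2⁻¹ * (b p.1 p.2 * (u p.1 - u p.2) ^ 2) := fun p => by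
    rw [formCoord_inr, ENNReal.toReal_ofNat, Real.rpow_ofNat, Real.norm_eq_abs, sq_abs, mul_pow,
      Real.sq_sqrt (div_nonneg (hb p.1 p.2) zero_le_two)]
    ring
  rw [memℓp_gen_iff (by norm_num)]
  constructor
  · intro hsum
    have hl := hsum.comp_injective Sum.inl_injective
    have hr := hsum.comp_injective Sum.inr_injective
    simp only [Function.comp_def, hinl] at hl
    simp only [Function.comp_def, hinr] at hr
    exact ⟨hl, (summable_mul_left_iff (by norm_num)).1 hr⟩
  · exact fun hu => Summable.sum _ (hu.1.congr fun x => (hinl x).symm)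
      ((hu.2.mul_left 2⁻¹).congr fun p => (hinr p).symm)

/-- The Hilbert space `(D(Q), ‖·‖_Q)`, realised as the subspace of the sequences in `ℓ²(X ⊕ X × X)`
that are coordinates of a function on `X`. -/
def FormSpace (b : X → X → ℝ) (m : X → ℝ) : Submodule ℝ ℓ^2(X ⊕ X × X, ℝ) where
  carrier := {w | ∃ u, formCoord b m u = w}
  zero_mem' := ⟨0, map_zero _⟩
  add_mem' := by
    rintro v w ⟨f, hf⟩ ⟨g, hg⟩
    exact ⟨f + g, by rw [map_add, hf, hg, lp.coeFn_add]⟩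
  smul_mem' := by
    rintro c w ⟨f, hf⟩
    exact ⟨c • f, by rw [map_smul, hf, lp.coeFn_smul]⟩

namespace FormSpace

/-- The value at `x` of the function on `X` represented by an element of `FormSpace b m`. It is
recovered from the coordinate `√m(x) u(x)`, hence has junk value `0` where `m x ≤ 0`. -/
noncomputable def eval (x : X) : FormSpace b m →L[ℝ] ℝ :=
  (√(m x))⁻¹ • lp.evalCLM ℝ (fun _ : X ⊕ X × X => ℝ) (p := 2) (.inl x) ∘L (FormSpace b m).subtypeL

theorem eval_eq_of_coe_eq (hm : ∀ x, 0 < m x) {w : FormSpace b m} {u : X → ℝ}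
    (hw : formCoord b m u = w.1) (x : X) : eval x w = u x := by
  have : eval x w = (√(m x))⁻¹ * w.1 (.inl x) := rfl
  rw [this, ← hw, formCoord_inl, inv_mul_cancel_left₀ (Real.sqrt_pos.2 (hm x)).ne']

theorem formCoord_eval (hm : ∀ x, 0 < m x) (w : FormSpace b m) :
    formCoord b m (eval · w) = w.1 := by
  obtain ⟨u, hu⟩ := w.2
  rw [funext (eval_eq_of_coe_eq hm hu), hu]

theorem isClosed (hm : ∀ x, 0 < m x) :
    IsClosed (FormSpace b m : Set ℓ^2(X ⊕ X × X, ℝ)) := by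
  let reconstruct : ℓ^2(X ⊕ X × X, ℝ) → X ⊕ X × X → ℝ := fun w =>
    formCoord b m fun x => (√(m x))⁻¹ * w (.inl x)
  have hset : (FormSpace b m : Set ℓ^2(X ⊕ X × X, ℝ)) = {w | reconstruct w = w} :=
    Set.ext fun w => ⟨fun hw => formCoord_eval hm ⟨w, hw⟩, fun hw => ⟨_, hw⟩⟩
  have hcoord : ∀ i, Continuous fun w : ℓ^2(X ⊕ X × X, ℝ) => w i := fun i =>
    (lp.evalCLM ℝ (fun _ : X ⊕ X × X => ℝ) (p := 2) i).continuous
  have hcoe : Continuous fun w : ℓ^2(X ⊕ X × X, ℝ) => (w : X ⊕ X × X → ℝ) :=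
    lp.uniformContinuous_coe.continuous
  rw [hset]
  refine isClosed_eq (continuous_pi ?_) hcoe
  rintro (x | p)
  · exact continuous_const.mul (continuous_const.mul (hcoord _))
  · exact continuous_const.mul
      ((continuous_const.mul (hcoord _)).sub (continuous_const.mul (hcoord _)))

theorem memDQ_eval (hb : ∀ x y, 0 ≤ b x y) (hm : ∀ x, 0 < m x) (w : FormSpace b m) :
    MemDQ b m (eval · w) := by
  rw [← memℓp_formCoord_iff hb fun x => (hm x).le, formCoord_eval hm]
  exact lp.memℓp _

theorem exists_eval_eq (hb : ∀ x y, 0 ≤ b x y) (hm : ∀ x, 0 < m x) {u : X → ℝ}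
    (hu : MemDQ b m u) : ∃ w : FormSpace b m, ∀ x, eval x w = u x :=
  ⟨⟨⟨formCoord b m u, (memℓp_formCoord_iff hb fun x => (hm x).le).2 hu⟩, u, rfl⟩,
    eval_eq_of_coe_eq hm rfl⟩

theorem inner_eq (hb : ∀ x y, 0 ≤ b x y) (hm : ∀ x, 0 < m x) (v w : FormSpace b m) :
    inner ℝ v w = energyBil b (eval · v) (eval · w) + ∑' x, eval x v * eval x w * m x := by
  have hinner : HasSum (fun i => formCoord b m (eval · v) i * formCoord b m (eval · w) i)
      (inner ℝ v w) := by
    have := lp.hasSum_inner (𝕜 := ℝ) v.1 w.1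
    simpa [formCoord_eval hm, mul_comm] using this
  have hinl : ∀ x, formCoord b m (eval · v) (.inl x) * formCoord b m (eval · w) (.inl x) =
      eval x v * eval x w * m x := fun x => by
    rw [formCoord_inl, formCoord_inl, mul_mul_mul_comm, Real.mul_self_sqrt (hm x).le, mul_comm]
  have hinr : ∀ p : X × X, formCoord b m (eval · v) (.inr p) * formCoord b m (eval · w) (.inr p) =
      1 / 2 * (b p.1 p.2 * (eval p.1 v - eval p.2 v) * (eval p.1 w - eval p.2 w)) := fun p => by
    rw [formCoord_inr, formCoord_inr, mul_mul_mul_comm,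
      Real.mul_self_sqrt (div_nonneg (hb p.1 p.2) zero_le_two)]
    ring
  rw [← hinner.tsum_eq, Summable.tsum_sum (hinner.summable.comp_injective Sum.inl_injective)
    (hinner.summable.comp_injective Sum.inr_injective), energyBil, ← tsum_mul_left, add_comm]
  exact congrArg₂ _ (tsum_congr hinr) (tsum_congr hinl)

theorem exists_toBounded (hb : ∀ x y, 0 ≤ b x y) (hm : ∀ x, 0 < m x) (hcc : CanCompact b m) :
    ∃ ι : FormSpace b m →L[ℝ] ℓ^∞(X, ℝ), ∀ w x, ι w x = eval x w := by
  have : CompleteSpace (FormSpace b m) := (isClosed hm).completeSpace_coe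
  have hbdd : ∀ w : FormSpace b m, Memℓp (eval · w) ∞ := fun w => by
    obtain ⟨M, hM⟩ := hcc _ (memDQ_eval hb hm w)
    exact memℓp_infty ⟨M, by rintro _ ⟨x, rfl⟩; exact hM x⟩
  let ι₀ : FormSpace b m →ₗ[ℝ] ℓ^∞(X, ℝ) :=
    { toFun := fun w => ⟨(eval · w), hbdd w⟩
      map_add' := fun v w => by ext x; exact map_add (eval x) v w
      map_smul' := fun c w => by ext x; exact map_smul (eval x) c w }
  refine ⟨ContinuousLinearMap.ofSeqClosedGraph (g := ι₀) fun ws w g hw hg => ?_, fun _ _ => rfl⟩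
  ext x
  have hgx : Tendsto (fun n => eval x (ws n)) atTop (𝓝 (g x)) :=
    ((lp.evalCLM ℝ (fun _ : X => ℝ) (p := ∞) x).continuous.tendsto g).comp hg
  exact tendsto_nhds_unique hgx (((eval x).continuous.tendsto w).comp hw)

theorem norm_sq_eq (hb : ∀ x y, 0 ≤ b x y) (hm : ∀ x, 0 < m x) (w : FormSpace b m) :
    ‖w‖ ^ 2 = energy b (eval · w) + ∑' x, eval x w ^ 2 * m x := by
  rw [← real_inner_self_eq_norm_sq, inner_eq hb hm, energyBil_self]
  simp only [sq]

theorem exists_norm_sq_le (hb : ∀ x y, 0 ≤ b x y) (hconn : GraphConnected b) (hm : FinMeasure m)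
    (hcc : CanCompact b m) (o : X) :
    ∃ K, 0 < K ∧ ∀ w : FormSpace b m, ‖w‖ ^ 2 ≤ K * (energy b (eval · w) + eval o w ^ 2) := by
  obtain ⟨ι, hι⟩ := exists_toBounded hb hm.pos hcc
  have hsup : ∀ u, MemDQ b m u → ∀ x, u x ^ 2 ≤ ‖ι‖ ^ 2 * (energy b u + ∑' y, u y ^ 2 * m y) := by
    intro u hu x
    obtain ⟨w, hw⟩ := exists_eval_eq hb hm.pos hu
    obtain rfl : (eval · w) = u := funext hw
    have hx : |eval x w| ≤ ‖ι‖ * ‖w‖ := hι w x ▸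
      (lp.norm_apply_le_norm ENNReal.top_ne_zero (ι w) x).trans (ι.le_opNorm w)
    rw [← norm_sq_eq hb hm.pos, ← mul_pow]
    exact sq_le_sq.2 (hx.trans (le_abs_self _))
  obtain ⟨K, hK, hKu⟩ := hconn.exists_tsum_sq_mul_le hb hm o hsup
  refine ⟨K + 1, by positivity, fun w => ?_⟩
  rw [norm_sq_eq hb hm.pos]
  linarith [hKu _ (memDQ_eval hb hm.pos w), sq_nonneg (eval o w)]

theorem exists_isCoercive (hb : ∀ x y, 0 ≤ b x y) (hconn : GraphConnected b) (hm : FinMeasure m)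
    (hcc : CanCompact b m) (o : X) :
    ∃ B : FormSpace b m →L[ℝ] FormSpace b m →L[ℝ] ℝ, IsCoercive B ∧
      ∀ v w, B v w = energyBil b (eval · v) (eval · w) + eval o v * eval o w := by
  obtain ⟨ι, hι⟩ := exists_toBounded hb hm.pos hcc
  obtain ⟨μ, hμ⟩ := exists_clm_eq_tsum_mul hm.summable
  obtain ⟨K, hK, hKw⟩ := exists_norm_sq_le hb hconn hm hcc o
  let B : FormSpace b m →L[ℝ] FormSpace b m →L[ℝ] ℝ :=
    isBoundedBilinearMap_inner.toContinuousLinearMap - mulForm μ ι ∘L ι +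
      (eval o).smulRight (eval o)
  have hB : ∀ v w, B v w = energyBil b (eval · v) (eval · w) + eval o v * eval o w := fun v w => by
    have hl2 : μ (ι v * ι w) = ∑' x, eval x v * eval x w * m x := by
      rw [hμ]
      exact tsum_congr fun x => by rw [lp.infty_coeFn_mul, Pi.mul_apply, hι, hι, mul_comm]
    calc B v w = inner ℝ v w - μ (ι v * ι w) + eval o v * eval o w := rfl
      _ = _ := by rw [hl2, inner_eq hb hm.pos, add_sub_cancel_right]
  refine ⟨B, ⟨K⁻¹, inv_pos.2 hK, fun w => ?_⟩, hB⟩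
  rw [hB, energyBil_self, mul_assoc, ← sq, ← sq, inv_mul_le_iff₀ hK]
  exact hKw w

end FormSpace

end FormDomain

section MeanFieldEquation

variable {X : Type*} {b : X → X → ℝ} {m h : X → ℝ}

theorem meanFieldForce_apply_eq_tsum {H : Type*} [NormedAddCommGroup H] [NormedSpace ℝ H]
    {κ μ : ℓ^∞(X, ℝ) →L[ℝ] ℝ} {ι : H →L[ℝ] ℓ^∞(X, ℝ)} (hκ : ∀ g, κ g = ∑' x, h x * m x * g x)
    (hμ : ∀ g, μ g = ∑' x, m x * g x) (w v : H) :
    meanFieldForce κ μ ι w v = (∑' x, m x) / (∑' x, h x * Real.exp (ι w x) * m x) *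
      (∑' x, h x * Real.exp (ι w x) * ι v x * m x) - ∑' x, ι v x * m x := by
  have hκexp : κ (NormedSpace.exp (ι w)) = ∑' x, h x * Real.exp (ι w x) * m x := by
    simp only [hκ, lp_infty_exp_apply, mul_right_comm]
  have hκmul : κ (NormedSpace.exp (ι w) * ι v) =
      ∑' x, h x * Real.exp (ι w x) * ι v x * m x := by
    rw [hκ]
    refine tsum_congr fun x => ?_
    rw [lp.infty_coeFn_mul, Pi.mul_apply, lp_infty_exp_apply]
    ring
  have hμ1 : μ 1 = ∑' x, m x := by simp [hμ]
  have hμι : μ (ι v) = ∑' x, ι v x * m x := by simp only [hμ, mul_comm]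
  rw [meanFieldForce_apply, hκexp, hκmul, hμ1, hμι]

theorem eventually_exists_energyBil_eq_meanField (hb : ∀ x y, 0 ≤ b x y) (hconn : GraphConnected b)
    (hm : FinMeasure m) (hcc : CanCompact b m) (o : X) (hh : Summable fun x => h x * m x)
    (hmean : ∑' x, h x * m x ≠ 0) :
    ∀ᶠ c in 𝓝 (0 : ℝ), ∃ w, MemDQ b m w ∧
      0 < (∑' x, h x * m x) * ∑' x, h x * Real.exp (w x) * m x ∧
      ∀ v, MemDQ b m v → energyBil b w v =
        c * ((∑' x, m x) / (∑' x, h x * Real.exp (w x) * m x) *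
          (∑' x, h x * Real.exp (w x) * v x * m x) - ∑' x, v x * m x) := by
  have : CompleteSpace (FormSpace b m) := (FormSpace.isClosed hm.pos).completeSpace_coe
  obtain ⟨ι, hι⟩ := FormSpace.exists_toBounded hb hm.pos hcc
  obtain ⟨κ, hκ⟩ := exists_clm_eq_tsum_mul hh
  obtain ⟨μ, hμ⟩ := exists_clm_eq_tsum_mul hm.summable
  obtain ⟨B, hBcoer, hB⟩ := FormSpace.exists_isCoercive hb hconn hm hcc o
  obtain ⟨e, he⟩ := FormSpace.exists_eval_eq hb hm.pos (hm.memDQ_const (b := b) 1)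
  have hκ1 : κ 1 = ∑' x, h x * m x := by simp [hκ]
  filter_upwards [eventually_exists_eq_smul_meanFieldForce hBcoer (hκ1 ▸ hmean) μ ι]
    with c ⟨w, hpos, hBw⟩
  have hwo : FormSpace.eval o w = 0 := by
    have hιe : ι e = 1 := by ext x; rw [hι, he]; rfl
    have htest : B w e = c * meanFieldForce κ μ ι w e := congr($hBw e)
    simpa [hB, he, energyBil_const_right,
      meanFieldForce_apply_of_map_eq_one (right_ne_zero_of_mul hpos.ne') hιe] using htest
  refine ⟨(FormSpace.eval · w), FormSpace.memDQ_eval hb hm.pos w, ?_, fun v hv => ?_⟩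
  · simpa only [hκ1, hκ, lp_infty_exp_apply, hι, mul_right_comm] using hpos
  · obtain ⟨v', hv'⟩ := FormSpace.exists_eval_eq hb hm.pos hv
    obtain rfl : (FormSpace.eval · v') = v := funext hv'
    have hweak : B w v' = c * meanFieldForce κ μ ι w v' := congr($hBw v')
    simpa only [hB, hwo, zero_mul, add_zero, meanFieldForce_apply_eq_tsum hκ hμ, hι] using hweak

theorem isLap_add_log (hm : FinMeasure m) (hcc : CanCompact b m) (hh : MemL2 m h) {w : X → ℝ}
    (hw : MemDQ b m w) {c s : ℝ} (hs : 0 < s)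
    (hweak : ∀ v, MemDQ b m v → energyBil b w v =
      s * (∑' x, h x * Real.exp (w x) * v x * m x) - c * ∑' x, v x * m x) :
    IsLap b m (fun x => w x + Real.log s) (fun x => h x * Real.exp (w x + Real.log s) - c) := by
  have hm0 : ∀ x, 0 ≤ m x := fun x => (hm.pos x).le
  have hexp : MemL2 m fun x => h x * Real.exp (w x) := by
    obtain ⟨M, hM⟩ := hcc w hw
    refine hh.mul_of_abs_le hm0 (C := Real.exp M) fun x => ?_
    rw [Real.abs_exp]
    exact Real.exp_le_exp.2 ((le_abs_self _).trans (hM x))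
  have hf : ∀ x, h x * Real.exp (w x + Real.log s) - c = h x * Real.exp (w x) * s - c := fun x => by
    rw [Real.exp_add, Real.exp_log hs, mul_assoc]
  simp only [hf]
  refine ⟨hw.add_const hm _,
    (hexp.mul_of_abs_le hm0 fun _ => le_rfl).sub hm0 (hm.memL2_const c), fun v hv => ?_⟩
  obtain ⟨M, hM⟩ := hcc v hv
  have hsum := (hexp.mul_of_abs_le hm0 hM).summable_mul hm
  calc energyBil b (fun x => w x + Real.log s) v = energyBil b w v := energyBil_add_const ..
    _ = ∑' x, (s * (h x * Real.exp (w x) * v x * m x) - c * (v x * m x)) := by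
        rw [hweak v hv, (hsum.mul_left s).tsum_sub ((hv.1.summable_mul hm).mul_left c),
          tsum_mul_left, tsum_mul_left]
    _ = ∑' x, (h x * Real.exp (w x) * s - c) * v x * m x := tsum_congr fun x => by ring

theorem stmt9_general (hb : ∀ x y, 0 ≤ b x y) (hconn : GraphConnected b) (hm : FinMeasure m)
    (hcc : CanCompact b m) (hh : MemL2 m h) (hmean : mean m h ≠ 0) :
    ∀ᶠ c in 𝓝 (0 : ℝ), 0 < c * mean m h →
      ∃ u : X → ℝ, IsLap b m u (fun x => h x * Real.exp (u x) - c) := by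
  obtain ⟨hA₀, hM⟩ : ∑' x, h x * m x ≠ 0 ∧ ∑' x, m x ≠ 0 := div_ne_zero_iff.1 hmean
  obtain ⟨o⟩ : Nonempty X := by
    by_contra hX
    have := not_nonempty_iff.1 hX
    exact hM tsum_empty
  filter_upwards [eventually_exists_energyBil_eq_meanField hb hconn hm hcc o
    (hh.summable_mul hm) hA₀]
    with c ⟨w, hw, hA, hweak⟩ hc
  have hs : 0 < c * ((∑' x, m x) / ∑' x, h x * Real.exp (w x) * m x) := by
    set M := ∑' x, m x
    set A₀ := ∑' x, h x * m x
    set A := ∑' x, h x * Real.exp (w x) * m x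
    have hA0 : A ≠ 0 := right_ne_zero_of_mul hA.ne'
    calc 0 < c * (A₀ / M) * (A₀ * A) * (M / (A₀ * A)) ^ 2 :=
          mul_pos (mul_pos hc hA) (sq_pos_of_ne_zero (div_ne_zero hM hA.ne'))
      _ = c * (M / A) := by field_simp
  exact ⟨_, isLap_add_log hm hcc hh hw hs fun v hv => by rw [hweak v hv]; ring⟩

end MeanFieldEquation

/-- if `h̄ < 0`, there is `c₀ < 0` such that `Lu = h e^u - c` is
solvable for every `c₀ < c < 0`. -/
theorem stmt9 {X : Type*} [Countable X] (b : X → X → ℝ) (m : X → ℝ)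
    (hb : IsGraph b) (hconn : GraphConnected b) (hm : FinMeasure m)
    (hcc : CanCompact b m) (h : X → ℝ) (hh2 : MemL2 m h) (hne : h ≠ 0)
    (hmean : mean m h < 0) :
    ∃ c₀ < (0 : ℝ), ∀ c : ℝ, c₀ < c → c < 0 →
      ∃ u : X → ℝ, IsLap b m u (fun x => h x * Real.exp (u x) - c) := by
  obtain ⟨ε, hε, hsolve⟩ :=
    Metric.eventually_nhds_iff.1 (stmt9_general hb.nonneg hconn hm hcc hh2 hmean.ne)
  exact ⟨-ε, neg_lt_zero.2 hε, fun c hc hc0 =>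
    hsolve (abs_sub_lt_iff.2 ⟨by linarith, by linarith⟩) (mul_pos_of_neg_of_neg hc0 hmean)⟩
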